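/- Let ⟨λ,ν⟩ and ⟨λ',ν'⟩ be reduced marked partitions of type X of the same integer n such that λ ≤ λ' in dominance order and d_S⟨λ,ν⟩ ≥ d_S⟨λ',ν'⟩ in dominance order. Suppose ⟨λ',ν'⟩ is special and ⟨λ,ν⟩ is not special. Then, with ζ the partition produced by the partial specialization at ⟨λ,ν⟩ (obtained from λ by replacing the l copies of the distinguished part a by a+1, a (l−2 times), a−1), one has ζ ≤ λ' in dominance order. -/

import Mathlib

namespace NilDual

/-- A "partition" is encoded as a multiset of natural numbers (its parts). -/
abbrev Ptn := Multiset ℕ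

/-- All parts are positive. -/
def IsPartition (l : Ptn) : Prop := ∀ a ∈ l, 0 < a

/-- `height l a` is the number of parts of `l` that are ≥ `a`. -/
def height (l : Ptn) (a : ℕ) : ℕ := Multiset.card (l.filter (fun p => a ≤ p))

/-- `psum l j` is the sum of the `j` largest parts of `l`. -/
def psum (l : Ptn) (j : ℕ) : ℕ := ∑ a ∈ Finset.Icc 1 l.sum, min j (height l a)

/-- `Dom l m` means `l ≤ m` in the dominance order. -/
def Dom (l m : Ptn) : Prop := ∀ j : ℕ, psum l j ≤ psum m j

/-- The transpose (conjugate) partition. -/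
def transpose (l : Ptn) : Ptn :=
  Multiset.filter (fun x => 0 < x)
    (Multiset.map (fun a => height l a) (Finset.Icc 1 l.sum).val)

/-- The largest part (0 for the empty partition). -/
def maxPart (l : Ptn) : ℕ := l.sup

/-- The smallest part (0 for the empty partition). -/
noncomputable def minPart (l : Ptn) : ℕ := sInf {a : ℕ | a ∈ l}

/-- `λ⁺`: add 1 to the largest part. -/
def up (l : Ptn) : Ptn := (maxPart l + 1) ::ₘ l.erase (maxPart l)

/-- `λ⁻`: subtract 1 from the smallest part, deleting it if it becomes 0. -/
noncomputable def down (l : Ptn) : Ptn :=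
  if minPart l ≤ 1 then l.erase (minPart l)
  else (minPart l - 1) ::ₘ l.erase (minPart l)

/-- The join `λ ∨ μ = (λ* ∪ μ*)*`. -/
def pjoin (l m : Ptn) : Ptn := transpose (transpose l + transpose m)

/-- `λ₋ = (λ*⁻)*`. -/
noncomputable def lowerStar (l : Ptn) : Ptn := transpose (down (transpose l))

inductive PType | B | C | D
deriving DecidableEq

/-- Parts of this parity must occur with even multiplicity in a partition of type `X`. -/
def badPart : PType → ℕ → Prop
  | PType.B, a => Even a
  | PType.C, a => Odd a
  | PType.D, a => Even a

/-- Membership in `𝒫_X` (sum unconstrained). -/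
def InP (X : PType) (l : Ptn) : Prop :=
  IsPartition l ∧ ∀ a : ℕ, badPart X a → Even (l.count a)

/-- The parity of `n` required for `𝒫_X(n)` to be defined. -/
def sumParity : PType → ℕ → Prop
  | PType.B, n => Odd n
  | PType.C, n => Even n
  | PType.D, n => Even n

/-- `m` is the X-collapse of `l`: `m ∈ 𝒫_X(|l|)`, `m ≤ l` in dominance order, and `m`
dominates every member of `𝒫_X(|l|)` that is dominated by `l`. -/
def IsCollapse (X : PType) (l m : Ptn) : Prop :=
  InP X m ∧ m.sum = l.sum ∧ Dom m l ∧
    ∀ ν : Ptn, InP X ν → ν.sum = l.sum → Dom ν l → Dom ν m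

def CollapseDefined (X : PType) (l : Ptn) : Prop := ∃ m, IsCollapse X l m

open Classical in
/-- The X-collapse `λ_X` (junk value `0` if it does not exist). -/
noncomputable def collapse (X : PType) (l : Ptn) : Ptn :=
  if h : CollapseDefined X l then h.choose else 0

/-- `l` is superior to `m`: smallest part of `l` ≥ largest part of `m`. -/
def Superior (l m : Ptn) : Prop := maxPart m ≤ minPart l

def EvenlySuperior (l m : Ptn) : Prop := ∃ k : ℕ, Even k ∧ maxPart m ≤ k ∧ k ≤ minPart l

def OddlySuperior (l m : Ptn) : Prop := ∃ k : ℕ, Odd k ∧ maxPart m ≤ k ∧ k ≤ minPart l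

/-- The parity required of marked parts in type `X`. -/
def markParity : PType → ℕ → Prop
  | PType.C, a => Even a
  | _, a => Odd a

/-- `(ν, η)` is a marked partition of type `X`, with underlying partition `λ = ν + η`. -/
def IsMarked (X : PType) (nu eta : Ptn) : Prop :=
  InP X (nu + eta) ∧ sumParity X (nu + eta).sum ∧
  (∀ a ∈ nu, nu.count a = 1 ∧ markParity X a) ∧
  ((X = PType.B ∨ X = PType.D) → Even (Multiset.card nu))

/-- The Sommers duality map `d_S` on marked partitions `(ν, η)`. -/
noncomputable def dS (X : PType) (nu eta : Ptn) : Ptn :=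
  match X with
  | PType.B => collapse PType.C (transpose (nu + collapse PType.C (down eta)))
  | PType.C => collapse PType.B (transpose (nu + collapse PType.B (up eta)))
  | PType.D =>
      collapse PType.D (transpose (nu + transpose (collapse PType.D (transpose eta))))

/-- `a` is a markable part of `l` in type `X`. -/
def Markable (X : PType) (l : Ptn) (a : ℕ) : Prop :=
  a ∈ l ∧ markParity X a ∧
    (match X with
     | PType.B => Odd (height l a)
     | PType.C => Even (height l a)
     | PType.D => Even (height l a))

/-- The marked partition `⟨l, ν⟩` is reduced. -/
def Reduced (X : PType) (l nu : Ptn) : Prop := ∀ a ∈ nu, Markable X l a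

/-- The parts entering the definition of a special marked partition:
even of odd height (B), odd of even height (C), even of even height (D). -/
def AntiPart (X : PType) (l : Ptn) (a : ℕ) : Prop :=
  match X with
  | PType.B => Even a ∧ Odd (height l a)
  | PType.C => Odd a ∧ Even (height l a)
  | PType.D => Even a ∧ Even (height l a)

/-- The reduced marked partition `⟨l, ν⟩` is special. -/
def SpecialMP (X : PType) (l nu : Ptn) : Prop :=
  ∀ a ∈ l, AntiPart X l a → Even (height nu a)

/-- `a` is the largest part of `l` whose height satisfies `P`. -/
def LargestWith (l : Ptn) (P : ℕ → Prop) (a : ℕ) : Prop :=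
  a ∈ l ∧ P (height l a) ∧ ∀ b ∈ l, P (height l b) → b ≤ a

/-- Height parity for the top marked part in a basic block. -/
def heightParity : PType → ℕ → Prop
  | PType.B => fun n => Odd n
  | _ => fun n => Even n

/-- A basic block of type `X`. -/
def BasicBlock (X : PType) (nu eta : Ptn) : Prop :=
  IsMarked X nu eta ∧
  ((∃ n1 n2 : ℕ, n1 < n2 ∧ nu = {n2, n1} ∧ n1 = minPart (nu + eta) ∧
      LargestWith (nu + eta) (heightParity X) n2) ∨
   (X = PType.C ∧ ∃ n2 : ℕ, nu = {n2} ∧ LargestWith (nu + eta) (heightParity X) n2))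

/-- An ultrabasic block: a basic block with `n₁ ≤ 1`. -/
def Ultrabasic (X : PType) (nu eta : Ptn) : Prop :=
  BasicBlock X nu eta ∧ (Multiset.card nu = 2 → minPart nu ≤ 1)


section Aux
open Finset

lemma height_antitone (l : Ptn) {a b : ℕ} (h : a ≤ b) : height l b ≤ height l a := by
  unfold height
  exact Multiset.card_le_card (Multiset.monotone_filter_right _ (fun x hx => h.trans hx))

lemma height_cons (x : ℕ) (l : Ptn) (a : ℕ) :
    height (x ::ₘ l) a = height l a + if a ≤ x then 1 else 0 := by
  unfold height
  rw [Multiset.filter_cons]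
  split_ifs <;> simp [add_comm]

lemma height_zero' (a : ℕ) : height 0 a = 0 := by simp [height]

lemma height_add (l m : Ptn) (a : ℕ) : height (l + m) a = height l a + height m a := by
  simp [height, Multiset.filter_add]

lemma height_of_sum_lt (l : Ptn) {a : ℕ} (h : l.sum < a) : height l a = 0 := by
  unfold height
  rw [Multiset.card_eq_zero, Multiset.filter_eq_nil]
  intro x hx hax
  have := Multiset.le_sum_of_mem hx
  omega

lemma height_le_card (l : Ptn) (a : ℕ) : height l a ≤ Multiset.card l :=
  Multiset.card_le_card (Multiset.filter_le _ _)

lemma count_add_height (l : Ptn) (a : ℕ) : l.count a + height l (a + 1) = height l a := by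
  induction l using Multiset.induction_on with
  | empty => simp [height]
  | cons x l ih =>
    rw [height_cons, height_cons, Multiset.count_cons, ← ih]
    split_ifs <;> omega

def part (l : Ptn) (i : ℕ) : ℕ := #{a ∈ Finset.Icc 1 l.sum | i < height l a}

lemma le_part_iff (l : Ptn) (i a : ℕ) (ha : 1 ≤ a) : a ≤ part l i ↔ i < height l a := by
  constructor
  · intro h
    by_contra hc
    have : part l i ≤ #(Finset.Icc 1 (a - 1)) := by
      apply Finset.card_le_card
      intro b hb
      simp only [Finset.mem_filter, Finset.mem_Icc] at hb ⊢
      refine ⟨hb.1.1, ?_⟩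
      by_contra hb'
      have := height_antitone l (show a ≤ b by omega)
      omega
    simp at this
    omega
  · intro h
    have : #(Finset.Icc 1 a) ≤ part l i := by
      apply Finset.card_le_card
      intro b hb
      simp only [Finset.mem_filter, Finset.mem_Icc] at hb ⊢
      have h2 := height_antitone l hb.2
      refine ⟨⟨hb.1, ?_⟩, by omega⟩
      by_contra hb'
      have := height_of_sum_lt l (show l.sum < b by omega)
      omega
    simpa using this

lemma part_antitone (l : Ptn) : Antitone (part l) := by
  intro i j hij
  apply Finset.card_le_card
  intro b hb
  simp only [Finset.mem_filter] at hb ⊢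
  exact ⟨hb.1, by omega⟩

lemma part_eq_of (l : Ptn) (i n : ℕ) (h : ∀ a, 1 ≤ a → (a ≤ n ↔ i < height l a)) :
    part l i = n := by
  apply le_antisymm
  · rcases Nat.eq_zero_or_pos (part l i) with h0 | h0
    · omega
    · exact (h _ h0).2 ((le_part_iff l i _ h0).1 le_rfl)
  · rcases Nat.eq_zero_or_pos n with h0 | h0
    · omega
    · exact (le_part_iff l i _ h0).2 ((h _ h0).1 le_rfl)

lemma psum_eq (l : Ptn) (j : ℕ) : psum l j = ∑ i ∈ Finset.range j, part l i := by
  unfold psum part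
  simp_rw [Finset.card_filter]
  rw [Finset.sum_comm]
  apply Finset.sum_congr rfl
  intro a _
  rw [← Finset.card_filter]
  have : (Finset.range j).filter (fun i => i < height l a) = Finset.range (min j (height l a)) := by
    ext i; simp
  rw [this, Finset.card_range]

lemma psum_zero (l : Ptn) : psum l 0 = 0 := by simp [psum_eq]

lemma psum_succ (l : Ptn) (j : ℕ) : psum l (j + 1) = psum l j + part l j := by
  simp [psum_eq, Finset.sum_range_succ]

lemma psum_eq_range (l : Ptn) (j N : ℕ) (hN : l.sum ≤ N) :
    psum l j = ∑ i ∈ Finset.range N, min j (height l (i + 1)) := by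
  unfold psum
  have h1 : ∑ a ∈ Finset.Icc 1 l.sum, min j (height l a)
      = ∑ i ∈ Finset.range l.sum, min j (height l (i + 1)) := by
    rw [Finset.range_eq_Ico, Finset.sum_Ico_add' (fun a => min j (height l a)) 0 l.sum 1]
    rfl
  rw [h1]
  apply Finset.sum_subset
  · intro x; simp; omega
  · intro x _ hx
    rw [height_of_sum_lt l (by simp at hx; omega)]
    simp

/-- sum of the truncations of the parts at `c` -/
def W (l : Ptn) (c : ℕ) : ℕ := (l.map (fun x => min x c)).sum

/-- sum of the excesses of the parts over `c` -/
def E (l : Ptn) (c : ℕ) : ℕ := (l.map (fun x => x - c)).sum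

lemma E_add_W (l : Ptn) (c : ℕ) : E l c + W l c = l.sum := by
  unfold E W
  rw [← Multiset.sum_map_add]
  conv_rhs => rw [← Multiset.map_id l]
  congr 1
  apply Multiset.map_congr rfl
  intro x _
  exact Nat.sub_add_min_cancel x c

lemma W_add (l m : Ptn) (c : ℕ) : W (l + m) c = W l c + W m c := by simp [W]

lemma E_add (l m : Ptn) (c : ℕ) : E (l + m) c = E l c + E m c := by simp [E]

lemma W_eq (l : Ptn) (c : ℕ) : W l c = ∑ i ∈ Finset.range c, height l (i + 1) := by
  induction l using Multiset.induction_on with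
  | empty => simp [W, height_zero']
  | cons x l ih =>
    have h1 : W (x ::ₘ l) c = min x c + W l c := by simp [W]
    rw [h1, ih]
    simp_rw [height_cons]
    rw [Finset.sum_add_distrib, add_comm]
    congr 1
    rw [← Finset.card_filter]
    have : (Finset.range c).filter (fun i => i + 1 ≤ x) = Finset.range (min x c) := by
      ext i; simp; omega
    rw [this, Finset.card_range]

lemma W_of_sum_le (l : Ptn) (N : ℕ) (h : l.sum ≤ N) : W l N = l.sum := by
  unfold W
  conv_rhs => rw [← Multiset.map_id l]
  congr 1
  apply Multiset.map_congr rfl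
  intro x hx
  have := Multiset.le_sum_of_mem hx
  simp; omega

lemma E_eq (l : Ptn) (c N : ℕ) (h : l.sum ≤ N) (hc : c ≤ N) :
    E l c = ∑ i ∈ Finset.Ico c N, height l (i + 1) := by
  have h1 := E_add_W l c
  have h2 := W_of_sum_le l N h
  rw [W_eq] at h1 h2
  have := Finset.sum_range_add_sum_Ico (fun i => height l (i + 1)) hc
  omega

lemma psum_le_E (l : Ptn) (j c : ℕ) : psum l j ≤ E l c + j * c := by
  rw [psum_eq_range l j (l.sum + c) (by omega), E_eq l c (l.sum + c) (by omega) (by omega),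
    ← Finset.sum_range_add_sum_Ico _ (show c ≤ l.sum + c by omega), add_comm]
  apply add_le_add
  · exact Finset.sum_le_sum (fun i _ => min_le_right _ _)
  · calc _ ≤ ∑ i ∈ Finset.range c, j := Finset.sum_le_sum (fun i _ => min_le_left _ _)
      _ = j * c := by simp [mul_comm]

lemma psum_eq_E (l : Ptn) (j c : ℕ) (h1 : height l (c + 1) ≤ j) (h2 : c = 0 ∨ j ≤ height l c) :
    psum l j = E l c + j * c := by
  rw [psum_eq_range l j (l.sum + c) (by omega), E_eq l c (l.sum + c) (by omega) (by omega),
    ← Finset.sum_range_add_sum_Ico _ (show c ≤ l.sum + c by omega), add_comm]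
  congr 1
  · apply Finset.sum_congr rfl
    intro i hi
    have := height_antitone l (show c + 1 ≤ i + 1 by simp at hi; omega)
    omega
  · have : ∑ i ∈ Finset.range c, min j (height l (i + 1)) = ∑ i ∈ Finset.range c, j := by
      apply Finset.sum_congr rfl
      intro i hi
      simp at hi
      have := height_antitone l (show i + 1 ≤ c by omega)
      omega
    rw [this]; simp [mul_comm]

lemma psum_eq_sum (l : Ptn) (j : ℕ) (h : Multiset.card l ≤ j) : psum l j = l.sum := by
  have h1 := psum_eq_E l j 0 ((height_le_card _ _).trans h) (Or.inl rfl)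
  simpa [E] using h1

lemma part_eq_zero (l : Ptn) (j : ℕ) (h : Multiset.card l ≤ j) : part l j = 0 := by
  have h1 := psum_eq_sum l j h
  have h2 := psum_eq_sum l (j + 1) (by omega)
  rw [psum_succ] at h2
  omega

lemma height_transpose (l : Ptn) (i : ℕ) : height (transpose l) (i + 1) = part l i := by
  unfold height transpose part
  rw [Multiset.filter_filter, Multiset.filter_map, Multiset.card_map]
  rw [Finset.card_def, Finset.filter_val]
  congr 1
  apply Multiset.filter_congr
  intro x _
  simp; omega

lemma part_transpose (l : Ptn) (i : ℕ) : part (transpose l) i = height l (i + 1) := by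
  apply part_eq_of
  intro a ha
  obtain ⟨b, rfl⟩ : ∃ b, a = b + 1 := ⟨a - 1, by omega⟩
  rw [height_transpose]
  have := le_part_iff l b (i + 1) (by omega)
  omega

lemma psum_transpose (l : Ptn) (c : ℕ) : psum (transpose l) c = W l c := by
  rw [psum_eq, W_eq]
  simp_rw [part_transpose]

lemma W_transpose (l : Ptn) (c : ℕ) : W (transpose l) c = psum l c := by
  rw [psum_eq, W_eq]
  simp_rw [height_transpose]

lemma sum_transpose (l : Ptn) : (transpose l).sum = l.sum := by
  have h1 := psum_eq_sum (transpose l) (l.sum + Multiset.card (transpose l)) (by omega)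
  rw [psum_transpose, W_of_sum_le _ _ (by omega)] at h1
  exact h1.symm

lemma exists_of_seq (f : ℕ → ℕ) (hf : Antitone f) (N : ℕ) (hN : ∀ i, N ≤ i → f i = 0) :
    ∃ m : Ptn, IsPartition m ∧ ∀ i, part m i = f i := by
  refine ⟨((Multiset.range N).map f).filter (fun x => 0 < x), ?_, ?_⟩
  · intro a ha
    exact (Multiset.mem_filter.1 ha).2
  · intro i
    apply part_eq_of
    intro a ha
    have h1 : height (((Multiset.range N).map f).filter (fun x => 0 < x)) a
        = #((Finset.range N).filter (fun i => a ≤ f i)) := by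
      unfold height
      rw [Multiset.filter_filter, Multiset.filter_map, Multiset.card_map]
      rw [Finset.card_def, Finset.filter_val]
      congr 1
      apply Multiset.filter_congr
      intro x _
      simp; omega
    rw [h1]
    constructor
    · intro h
      have : #(Finset.range (i + 1)) ≤ #((Finset.range N).filter (fun i => a ≤ f i)) := by
        apply Finset.card_le_card
        intro b hb
        simp only [Finset.mem_filter, Finset.mem_range] at hb ⊢
        have h3 := hf (show b ≤ i by omega)
        refine ⟨?_, by omega⟩
        by_contra hb'
        have := hN b (by omega)
        omega
      simpa using this
    · intro h
      by_contra hc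
      have : #((Finset.range N).filter (fun i => a ≤ f i)) ≤ #(Finset.range i) := by
        apply Finset.card_le_card
        intro b hb
        simp only [Finset.mem_filter, Finset.mem_range] at hb ⊢
        by_contra hb'
        have h3 := hf (show i ≤ b by omega)
        omega
      simp at this
      omega

lemma seq_collapse (p : ℕ → ℕ) (hp : Antitone p) (e : ℕ) (he : e ≤ 1) (N : ℕ)
    (hN : ∀ i, N ≤ i → p i = 0) (hev : e = 0 → Even (∑ i ∈ range N, p i)) :
    ∃ f : ℕ → ℕ, Antitone f ∧ (∃ M, (∀ i, M ≤ i → f i = 0) ∧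
        ∀ j, M ≤ j → ∑ i ∈ range j, f i = ∑ i ∈ range j, p i) ∧
      (∀ j, Odd (∑ i ∈ range (j + 1), f i + e * (j + 1)) → f j = f (j + 1) ∧ Odd (f j + e)) ∧
      ∀ j, ∑ i ∈ range j, f i = ∑ i ∈ range j, p i ∨
        (∑ i ∈ range j, f i + 1 = ∑ i ∈ range j, p i ∧ Odd (∑ i ∈ range j, p i + e * j) ∧
          ∀ k, j = k + 1 → ¬ (p k = p (k + 1) ∧ Odd (p k + e))) := by
  classical
  obtain ⟨P, hP⟩ : ∃ P : ℕ → ℕ, ∀ j, P j = ∑ i ∈ range j, p i := ⟨_, fun _ => rfl⟩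
  have hP0 : P 0 = 0 := by simp [hP]
  have hPs : ∀ j, P (j + 1) = P j + p j := fun j => by simp [hP, sum_range_succ]
  simp_rw [← hP] at hev ⊢
  have hpa : ∀ j, p (j + 1) ≤ p j := fun j => hp (by omega)
  have hPN : ∀ j, N ≤ j → P j = P N := by
    intro j hj
    induction j, hj using Nat.le_induction with
    | base => rfl
    | succ j hj ih => rw [hPs, ih, hN j hj]; rfl
  obtain ⟨ε, hε0, hε⟩ : ∃ ε : ℕ → ℕ, ε 0 = 0 ∧ ∀ j, ε (j + 1) =
      if (P (j + 1) + e * (j + 1)) % 2 = 1 ∧ ¬ (p j = p (j + 1) ∧ (p j + e) % 2 = 1)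
      then 1 else 0 :=
    ⟨fun j => match j with
      | 0 => 0
      | j + 1 => if (P (j + 1) + e * (j + 1)) % 2 = 1 ∧
          ¬ (p j = p (j + 1) ∧ (p j + e) % 2 = 1) then 1 else 0, rfl, fun _ => rfl⟩
  have hs : ∀ j, (P (j + 1) + e * (j + 1)) = (P j + e * j) + (p j + e) := by
    intro j; rw [hPs]; ring
  have hs0 : P 0 + e * 0 = 0 := by simp [hP0]
  obtain ⟨s, hsd⟩ : ∃ s : ℕ → ℕ, ∀ j, s j = P j + e * j := ⟨_, fun _ => rfl⟩
  simp_rw [← hsd] at hs hs0 hε ⊢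
  have hε1 : ∀ j, ε j ≤ 1 := by
    intro j; cases j with
    | zero => omega
    | succ j => rw [hε]; split_ifs <;> omega
  have hodd : ∀ j, ε j = 1 → s j % 2 = 1 := by
    intro j h; cases j with
    | zero => omega
    | succ j => rw [hε] at h; split_ifs at h with h1; exact h1.1
  -- at a good part, both neighbouring indices are decremented
  have hgl : ∀ j, s (j + 1) % 2 = 1 → (p j + e) % 2 = 0 → ε j = 1 := by
    intro j h1 h2
    have h3 := hs j
    cases j with
    | zero => omega
    | succ j =>
      rw [hε, if_pos]
      refine ⟨by omega, ?_⟩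
      rintro ⟨h4, h5⟩
      rw [h4] at h5; omega
  have hgr : ∀ j, s (j + 1) % 2 = 1 → (p (j + 1) + e) % 2 = 0 → ε (j + 1 + 1) = 1 := by
    intro j h1 h2
    have h3 := hs (j + 1)
    rw [hε, if_pos]
    refine ⟨by omega, ?_⟩
    rintro ⟨h4, h5⟩
    omega
  have hle : ∀ j, ε (j + 1) ≤ p j + ε j := by
    intro j
    have h1 := hε1 (j + 1)
    by_contra hc
    have h2 : ε (j + 1) = 1 := by omega
    have h3 := hodd _ h2
    have h4 : p j = 0 := by omega
    have h5 := hpa j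
    have h6 := hgl j h3
    have h7 := hε j
    rw [h2] at h7
    split_ifs at h7 with h8
    omega
  have hPle : ∀ j, ε j ≤ P j := by
    intro j
    induction j with
    | zero => omega
    | succ j ih =>
      have := hle j
      rw [hPs]
      have h1 := hε1 (j + 1)
      by_contra hc
      omega
  obtain ⟨f, hf⟩ : ∃ f : ℕ → ℕ, ∀ j, f j = p j + ε j - ε (j + 1) := ⟨_, fun _ => rfl⟩
  refine ⟨f, ?_, ?_⟩
  · apply antitone_nat_of_succ_le
    intro j
    have h1 := hle j
    have h2 := hle (j + 1)
    have h3 := hε1 j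
    have h4 := hε1 (j + 1)
    have h5 := hε1 (j + 1 + 1)
    have h6 := hpa j
    rw [hf, hf]
    rcases Nat.eq_zero_or_pos (ε (j + 1)) with h7 | h7
    · omega
    have h8 := hodd (j + 1) (by omega)
    have h9 := hgl j h8
    have h10 := hgr j h8
    have h11 := hε j
    split_ifs at h11 with h12
    · omega
    · omega
  have hF : ∀ j, ∑ i ∈ range j, f i + ε j = P j := by
    intro j
    induction j with
    | zero => simp [hε0, hP0]
    | succ j ih =>
      rw [sum_range_succ, hPs, hf]
      have := hle j
      omega
  have hεz : ∀ j, N ≤ j → ε (j + 1) = 0 := by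
    intro j hj
    rw [hε, if_neg]
    rintro ⟨h1, h2⟩
    have h3 := hN j hj
    have h4 := hN (j + 1) (by omega)
    rw [h3, h4] at h2
    have he0 : e = 0 := by omega
    have := hev he0
    rw [hsd, hPN (j + 1) (by omega), he0] at h1
    rw [Nat.even_iff] at this
    omega
  refine ⟨⟨N + 1, ?_, ?_⟩, ?_, ?_⟩
  · intro i hi
    obtain ⟨k, rfl⟩ : ∃ k, i = k + 1 := ⟨i - 1, by omega⟩
    have h1 := hN (k + 1) (by omega)
    have h2 := hεz k (by omega)
    rw [hf]
    omega
  · intro i hi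
    obtain ⟨k, rfl⟩ : ∃ k, i = k + 1 := ⟨i - 1, by omega⟩
    have h2 := hεz k (by omega)
    have := hF (k + 1)
    omega
  · intro j hj
    rw [hf j, hf (j + 1)]
    have h1 := hF (j + 1)
    have h2 := hsd (j + 1)
    have h3 := hε1 (j + 1)
    rw [Nat.odd_iff] at hj ⊢
    have h4 : ε (j + 1) = 0 := by
      by_contra hc
      have h5 := hodd (j + 1) (by omega)
      omega
    have h5 : s (j + 1) % 2 = 1 := by omega
    have h6 := hε j
    rw [h4] at h6
    split_ifs at h6 with h7
    have h8 : p j = p (j + 1) ∧ (p j + e) % 2 = 1 := by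
      by_contra hc; exact h7 ⟨h5, hc⟩
    have h9 := hs j
    have h10 := hs (j + 1)
    have h11 := hodd j
    have h12 := hodd (j + 1 + 1)
    have h13 := hε1 j
    have h14 := hε1 (j + 1 + 1)
    omega
  · intro j
    have h1 := hF j
    have h3 := hε1 j
    rcases Nat.eq_zero_or_pos (ε j) with h7 | h7
    · left; omega
    · right
      have h8 := hodd j (by omega)
      refine ⟨by omega, by rw [Nat.odd_iff]; omega, ?_⟩
      rintro k rfl ⟨h9, h10⟩
      rw [Nat.odd_iff] at h10
      have h11 := hε k
      rw [if_neg (by tauto)] at h11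
      omega

/-- shift making bad parts odd -/
def ee : PType → ℕ
  | PType.C => 0
  | _ => 1

lemma ee_le (X : PType) : ee X ≤ 1 := by cases X <;> simp [ee]

lemma bad_iff (X : PType) (c : ℕ) : badPart X c ↔ Odd (c + ee X) := by
  cases X <;> simp [badPart, ee, Nat.odd_add_one]

lemma even_sum_map (l : Ptn) (f : ℕ → ℕ) (h : ∀ x, Even (l.count x) ∨ Even (f x)) :
    Even (l.map f).sum := by
  rw [Finset.sum_multiset_map_count]
  apply Finset.even_sum
  intro x _
  rw [smul_eq_mul, Nat.even_mul]
  exact h x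

lemma E_even_good {X : PType} {l : Ptn} (hl : InP X l) {c : ℕ} (hc : Even (c + ee X)) :
    Even (E l c) := by
  apply even_sum_map
  intro x
  by_cases hx : badPart X x
  · exact Or.inl (hl.2 x hx)
  · right
    rw [bad_iff, Nat.odd_iff] at hx
    rw [Nat.even_iff] at hc ⊢
    omega

lemma height_eq_sum (l : Ptn) (c : ℕ) :
    height l c = (l.map (fun x => if c ≤ x then 1 else 0)).sum := by
  induction l using Multiset.induction_on with
  | empty => simp [height]
  | cons x l ih => rw [height_cons, ih]; simp [add_comm]

lemma E_add_height_bad {X : PType} {l : Ptn} (hl : InP X l) {c : ℕ} (hc : Odd (c + ee X)) :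
    Even (E l c + height l c) := by
  rw [height_eq_sum, E, ← Multiset.sum_map_add]
  apply even_sum_map
  intro x
  by_cases hx : badPart X x
  · exact Or.inl (hl.2 x hx)
  · right
    rw [bad_iff, Nat.odd_iff] at hx
    rw [Nat.odd_iff] at hc
    rw [Nat.even_iff]
    split_ifs <;> omega

lemma E_add_height_mark {l : Ptn} {c : ℕ} (h : ∀ x ∈ l, Odd (x + c)) :
    Even (E l c + height l c) := by
  rw [height_eq_sum, E, ← Multiset.sum_map_add]
  apply even_sum_map
  intro x
  by_cases hx : x ∈ l
  · right
    have := h x hx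
    rw [Nat.odd_iff] at this
    rw [Nat.even_iff]
    split_ifs <;> omega
  · left; rw [Multiset.count_eq_zero_of_notMem hx]; simp

lemma psum_succ_E (l : Ptn) (j c : ℕ) (h1 : c ≤ part l j) (h2 : part l (j + 1) ≤ c) :
    psum l (j + 1) = E l c + (j + 1) * c := by
  have h3 := le_part_iff l (j + 1) (c + 1) (by omega)
  apply psum_eq_E
  · omega
  · rcases Nat.eq_zero_or_pos c with h | h
    · exact Or.inl h
    · have h4 := le_part_iff l j c h
      right; omega

lemma inP_odd {X : PType} {l : Ptn} (hl : InP X l) (j : ℕ)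
    (h : Odd (psum l (j + 1) + ee X * (j + 1))) :
    part l j = part l (j + 1) ∧ Odd (part l j + ee X) := by
  obtain ⟨c, hc⟩ : ∃ c, c = part l j := ⟨_, rfl⟩
  have hanti : part l (j + 1) ≤ part l j := part_antitone l (by omega)
  have h1 := psum_succ_E l j c (by omega) (by omega)
  have h2 : psum l (j + 1) + ee X * (j + 1) = E l c + (j + 1) * (c + ee X) := by rw [h1]; ring
  rw [h2] at h
  rw [← hc]
  rcases Nat.even_or_odd (c + ee X) with h3 | h3
  · exfalso
    have h4 := E_even_good hl h3
    exact Nat.not_even_iff_odd.2 h (h4.add (h3.mul_left _))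
  · refine ⟨?_, h3⟩
    by_contra hne
    have hcpos : 1 ≤ c := by omega
    have h5 := le_part_iff l j c hcpos
    have h6 := le_part_iff l (j + 1) c hcpos
    have h7 : height l c = j + 1 := by omega
    have h4 := E_add_height_bad hl h3
    rw [h7] at h4
    apply Nat.not_even_iff_odd.2 h
    rw [Nat.even_add] at h4 ⊢
    rw [h4, Nat.even_mul]
    have := Nat.not_even_iff_odd.2 h3
    tauto

lemma inP_of {X : PType} {l : Ptn} (hp : IsPartition l)
    (h : ∀ j, Odd (psum l (j + 1) + ee X * (j + 1)) →
      part l j = part l (j + 1) ∧ Odd (part l j + ee X)) : InP X l := by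
  refine ⟨hp, ?_⟩
  intro c hc
  rw [bad_iff] at hc
  rcases Nat.eq_zero_or_pos c with h0 | h0
  · rw [Multiset.count_eq_zero_of_notMem]
    · simp
    · intro hm
      have := hp c hm
      omega
  have key : ∀ b, 1 ≤ b → Even (psum l (height l b) + ee X * height l b) := by
    intro b hb
    rcases Nat.eq_zero_or_pos (height l b) with h1 | h1
    · rw [h1, psum_zero]; simp
    · obtain ⟨j, hj⟩ : ∃ j, height l b = j + 1 := ⟨height l b - 1, by omega⟩
      rw [hj]
      by_contra hne
      have h2 := h j (Nat.not_even_iff_odd.1 hne)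
      have h3 := le_part_iff l j b hb
      have h4 := le_part_iff l (j + 1) b hb
      omega
  have k1 := key c h0
  have k2 := key (c + 1) (by omega)
  have hcnt := count_add_height l c
  rw [psum_eq_E l (height l c) c (by omega) (Or.inr le_rfl)] at k1
  rw [psum_eq_E l (height l (c + 1)) c le_rfl (Or.inr (by omega))] at k2
  have k3 : E l c + height l c * c + ee X * height l c =
      (E l c + height l (c + 1) * c + ee X * height l (c + 1)) + l.count c * (c + ee X) := by
    rw [← hcnt]; ring
  rw [k3, Nat.even_add, Nat.even_mul] at k1
  have := Nat.not_even_iff_odd.2 hc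
  tauto

lemma touch {l m : Ptn} (hd : Dom l m) {j : ℕ} (h : psum l (j + 1) = psum m (j + 1)) :
    part m j ≤ part l j ∧ part l (j + 1) ≤ part m (j + 1) := by
  have h1 := hd j
  have h2 := hd (j + 1 + 1)
  rw [psum_succ l (j + 1), psum_succ m (j + 1)] at h2
  rw [psum_succ, psum_succ] at h
  rw [psum_succ, psum_succ] at h2
  omega

lemma collapse_exists (X : PType) (l : Ptn) (hC : X = PType.C → Even l.sum) :
    ∃ m, IsCollapse X l m ∧
      ∀ j t, t ≤ psum l j → Even (t + ee X * j) → t ≤ psum m j := by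
  obtain ⟨f, hf, ⟨M, hM, hMs⟩, hodd, hlow⟩ := seq_collapse (part l) (part_antitone l) (ee X)
    (ee_le X) (Multiset.card l) (part_eq_zero l) (by
      intro h
      rw [← psum_eq, psum_eq_sum l _ le_rfl]
      cases X <;> simp [ee] at h
      exact hC rfl)
  obtain ⟨m, hmp, hm⟩ := exists_of_seq f hf M hM
  simp_rw [← hm, ← psum_eq] at hMs hodd hlow
  refine ⟨m, ⟨inP_of hmp hodd, ?_, ?_, ?_⟩, ?_⟩
  · have h1 := hMs (M + Multiset.card m + Multiset.card l) (by omega)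
    rwa [psum_eq_sum _ _ (by omega), psum_eq_sum _ _ (by omega)] at h1
  · intro j
    rcases hlow j with h | h <;> omega
  · intro ν hν _ hd j
    have hdj := hd j
    rcases hlow j with h | ⟨h1, h2, h3⟩
    · omega
    · by_contra hlt
      have heq : psum ν j = psum l j := by omega
      cases j with
      | zero => rw [psum_zero, psum_zero] at h1; omega
      | succ k =>
        have ht := touch hd heq
        rw [← heq] at h2
        have h4 := inP_odd hν k h2
        have h5 : part l (k + 1) ≤ part l k := part_antitone l (by omega)
        apply h3 k rfl
        have h6 : part l k = part ν k := by omega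
        exact ⟨by omega, by rw [h6]; exact h4.2⟩
  · intro j t ht he
    rcases hlow j with h | ⟨h1, h2, h3⟩
    · omega
    · by_contra hlt
      have : t = psum l j := by omega
      rw [this] at he
      exact Nat.not_even_iff_odd.2 h2 he

lemma collapse_spec (X : PType) (l : Ptn) (hC : X = PType.C → Even l.sum) :
    InP X (collapse X l) ∧ (collapse X l).sum = l.sum ∧ Dom (collapse X l) l ∧
      ∀ j t, t ≤ psum l j → Even (t + ee X * j) → t ≤ psum (collapse X l) j := by
  obtain ⟨m, hm, hlow⟩ := collapse_exists X l hC
  have hdef : CollapseDefined X l := ⟨m, hm⟩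
  have hc : IsCollapse X l (collapse X l) := by
    unfold collapse
    rw [dif_pos hdef]
    exact hdef.choose_spec
  refine ⟨hc.1, hc.2.1, hc.2.2.1, ?_⟩
  intro j t ht he
  exact (hlow j t ht he).trans (hc.2.2.2 m hm.1 hm.2.1 hm.2.2.1 j)

lemma E_mono {l m : Ptn} (hd : Dom l m) (c : ℕ) : E l c ≤ E m c := by
  have h0 := height_antitone l (show c ≤ c + 1 by omega)
  have h1 := psum_eq_E l (height l (c + 1)) c le_rfl (Or.inr h0)
  have h2 := psum_le_E m (height l (c + 1)) c
  have := hd (height l (c + 1))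
  omega

lemma E_collapse_ge (X : PType) (l : Ptn) (hC : X = PType.C → Even l.sum) (c : ℕ)
    (hc : Even (c + ee X)) (hE : Even (E l c)) : E l c ≤ E (collapse X l) c := by
  obtain ⟨-, -, -, hlow⟩ := collapse_spec X l hC
  have h0 := height_antitone l (show c ≤ c + 1 by omega)
  have h1 := psum_eq_E l (height l (c + 1)) c le_rfl (Or.inr h0)
  have h2 := hlow (height l (c + 1)) _ le_rfl (by
    rw [h1]
    have : E l c + height l (c + 1) * c + ee X * height l (c + 1)
      = E l c + height l (c + 1) * (c + ee X) := by ring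
    rw [this]
    exact hE.add (hc.mul_left _))
  have h3 := psum_le_E (collapse X l) (height l (c + 1)) c
  omega

lemma E_collapse_lt (X : PType) (l : Ptn) (hC : X = PType.C → Even l.sum) (c : ℕ)
    (hc : Even (c + ee X)) (hE : Odd (E l c)) : E (collapse X l) c + 1 ≤ E l c := by
  obtain ⟨hP, -, hd, -⟩ := collapse_spec X l hC
  have h1 := E_even_good hP hc
  have h2 := E_mono hd c
  rw [Nat.odd_iff] at hE
  rw [Nat.even_iff] at h1
  omega

lemma sum_add_card_even {l : Ptn} (h : ∀ x ∈ l, Odd x) : Even (l.sum + Multiset.card l) := by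
  have : l.sum + Multiset.card l = (l.map (fun x => x + 1)).sum := by
    rw [Multiset.sum_map_add]; simp
  rw [this]
  apply even_sum_map
  intro x
  by_cases hx : x ∈ l
  · right; exact (h x hx).add_one
  · left; rw [Multiset.count_eq_zero_of_notMem hx]; simp

lemma minPart_mem {l : Ptn} {a : ℕ} (ha : a ∈ l) : minPart l ∈ l ∧ minPart l ≤ a := by
  refine ⟨?_, Nat.sInf_le ha⟩
  exact Nat.sInf_mem (s := {x | x ∈ l}) ⟨a, ha⟩

lemma down_spec {l : Ptn} {a : ℕ} (ha : a ∈ l) (hp : IsPartition l) :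
    (down l).sum + 1 = l.sum ∧ E (down l) a = E l a := by
  obtain ⟨hm, hle⟩ := minPart_mem ha
  have hpos := hp _ hm
  have hl := Multiset.cons_erase hm
  unfold down
  generalize minPart l = m at *
  generalize l.erase m = r at *
  subst hl
  split_ifs with h1 <;> simp [E] <;> omega

lemma maxPart_mem {l : Ptn} {a : ℕ} (ha : a ∈ l) : maxPart l ∈ l ∧ a ≤ maxPart l := by
  refine ⟨?_, Multiset.le_sup ha⟩
  unfold maxPart
  have hne : l ≠ 0 := by rintro rfl; simp at ha
  clear ha
  induction l using Multiset.induction_on with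
  | empty => exact absurd rfl hne
  | cons x l ih =>
    rw [Multiset.sup_cons]
    rcases le_total x l.sup with h | h
    · rw [sup_eq_right.2 h]
      by_cases hl : l = 0
      · subst hl; simp at h; simp [h]
      · exact Multiset.mem_cons_of_mem (ih hl)
    · rw [sup_eq_left.2 h]; exact Multiset.mem_cons_self _ _

lemma up_spec {l : Ptn} {a : ℕ} (ha : a ∈ l) :
    (up l).sum = l.sum + 1 ∧ E (up l) a = E l a + 1 := by
  obtain ⟨hm, hle⟩ := maxPart_mem ha
  have hl := Multiset.cons_erase hm
  unfold up
  generalize maxPart l = m at *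
  generalize l.erase m = r at *
  subst hl
  simp [E]; omega

lemma mark_odd {X : PType} {a x : ℕ} (ha : Odd (a + ee X)) (hx : markParity X x) :
    Odd (x + a) := by
  cases X <;> simp only [markParity, ee] at * <;> simp only [Nat.odd_iff, Nat.even_iff] at * <;>
    omega

lemma core (X : PType) (nu eta nu' eta' : Ptn) (a : ℕ) (hbad : Odd (a + ee X)) (hapos : 1 ≤ a)
    (h : IsMarked X nu eta) (h' : IsMarked X nu' eta')
    (hsum : (nu + eta).sum = (nu' + eta').sum)
    (hE : E (nu + eta) a = E (nu' + eta') a)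
    (hm : a ∈ nu + eta) (hm' : a ∈ nu' + eta')
    (hA : AntiPart X (nu + eta) a) (hk : Odd (height nu a)) (hk' : Even (height nu' a))
    (hds : Dom (dS X nu' eta') (dS X nu eta)) : False := by
  have hnota : ∀ ν : Ptn, (∀ b ∈ ν, ν.count b = 1 ∧ markParity X b) → a ∉ ν := by
    intro ν hν hav
    have := mark_odd hbad (hν a hav).2
    rw [Nat.odd_iff] at this
    omega
  have hma : a ∈ eta := (Multiset.mem_add.1 hm).resolve_left (hnota nu h.2.2.1)
  have hma' : a ∈ eta' := (Multiset.mem_add.1 hm').resolve_left (hnota nu' h'.2.2.1)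
  have hEn := E_add_height_mark (l := nu) (c := a)
    (fun x hx => mark_odd hbad (h.2.2.1 x hx).2)
  have hEn' := E_add_height_mark (l := nu') (c := a)
    (fun x hx => mark_odd hbad (h'.2.2.1 x hx).2)
  have hEl := E_add_height_bad h.1 hbad
  have hpe : IsPartition eta := fun x hx => h.1.1 x (Multiset.mem_add.2 (Or.inr hx))
  have hpe' : IsPartition eta' := fun x hx => h'.1.1 x (Multiset.mem_add.2 (Or.inr hx))
  rw [E_add] at hEl
  rw [E_add, E_add] at hE
  have hsp := h.2.1
  have hsp' := h'.2.1
  rw [Multiset.sum_add, Multiset.sum_add] at hsum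
  rw [Multiset.sum_add] at hsp hsp'
  have hda := hds a
  rw [Nat.even_iff] at hEl hEn hEn' hk'
  rw [Nat.odd_iff] at hbad hk
  cases X with
  | B =>
    have hc := h.2.2.2 (Or.inl rfl)
    have hc' := h'.2.2.2 (Or.inl rfl)
    have hcs := sum_add_card_even (l := nu) (fun x hx => (h.2.2.1 x hx).2)
    have hcs' := sum_add_card_even (l := nu') (fun x hx => (h'.2.2.1 x hx).2)
    obtain ⟨hd1, hd2⟩ := down_spec hma hpe
    obtain ⟨hd1', hd2'⟩ := down_spec hma' hpe'
    have hAh := hA.2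
    simp only [sumParity, ee] at hsp hsp' hbad
    rw [Nat.even_iff] at hc hc' hcs hcs'
    rw [Nat.odd_iff] at hsp hsp' hAh
    have hev : PType.C = PType.C → Even (down eta).sum := fun _ => by
      rw [Nat.even_iff]; omega
    have hev' : PType.C = PType.C → Even (down eta').sum := fun _ => by
      rw [Nat.even_iff]; omega
    have hca : Even (a + ee PType.C) := by simp only [ee]; rw [Nat.even_iff]; omega
    have h1 := E_collapse_ge PType.C (down eta) hev a hca (by rw [Nat.even_iff]; omega)
    have h2 := E_collapse_lt PType.C (down eta') hev' a hca (by rw [Nat.odd_iff]; omega)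
    have h3 := E_mono (collapse_spec PType.C (down eta) hev).2.2.1 a
    have hs := (collapse_spec PType.C (down eta) hev).2.1
    have hs' := (collapse_spec PType.C (down eta') hev').2.1
    obtain ⟨κ, hκ⟩ : ∃ κ, κ = nu + collapse PType.C (down eta) := ⟨_, rfl⟩
    obtain ⟨κ', hκ'⟩ : ∃ κ', κ' = nu' + collapse PType.C (down eta') := ⟨_, rfl⟩
    have hEκ : E κ a = E nu a + E (collapse PType.C (down eta)) a := by rw [hκ, E_add]
    have hEκ' : E κ' a = E nu' a + E (collapse PType.C (down eta')) a := by rw [hκ', E_add]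
    have hsκ : κ.sum = nu.sum + (collapse PType.C (down eta)).sum := by rw [hκ, Multiset.sum_add]
    have hsκ' : κ'.sum = nu'.sum + (collapse PType.C (down eta')).sum := by
      rw [hκ', Multiset.sum_add]
    have hW := E_add_W κ a
    have hW' := E_add_W κ' a
    simp only [dS] at hda
    rw [← hκ, ← hκ'] at hda
    have ho := (collapse_spec PType.C (transpose κ) (fun _ => by
      rw [sum_transpose, Nat.even_iff]; omega)).2.2.1 a
    have ho' := (collapse_spec PType.C (transpose κ') (fun _ => by
      rw [sum_transpose, Nat.even_iff]; omega)).2.2.2 a (W κ a + 1) (by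
        rw [psum_transpose]; omega) (by simp only [ee]; rw [Nat.even_iff]; omega)
    rw [psum_transpose] at ho
    omega
  | C =>
    obtain ⟨hd1, hd2⟩ := up_spec hma
    obtain ⟨hd1', hd2'⟩ := up_spec hma'
    have hAh := hA.2
    simp only [sumParity, ee] at hsp hsp' hbad
    rw [Nat.even_iff] at hsp hsp' hAh
    have hev : PType.B = PType.C → Even (up eta).sum := fun h => by cases h
    have hev' : PType.B = PType.C → Even (up eta').sum := fun h => by cases h
    have hca : Even (a + ee PType.B) := by simp only [ee]; rw [Nat.even_iff]; omega
    have h1 := E_collapse_ge PType.B (up eta) hev a hca (by rw [Nat.even_iff]; omega)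
    have h2 := E_collapse_lt PType.B (up eta') hev' a hca (by rw [Nat.odd_iff]; omega)
    have h3 := E_mono (collapse_spec PType.B (up eta) hev).2.2.1 a
    have hs := (collapse_spec PType.B (up eta) hev).2.1
    have hs' := (collapse_spec PType.B (up eta') hev').2.1
    obtain ⟨κ, hκ⟩ : ∃ κ, κ = nu + collapse PType.B (up eta) := ⟨_, rfl⟩
    obtain ⟨κ', hκ'⟩ : ∃ κ', κ' = nu' + collapse PType.B (up eta') := ⟨_, rfl⟩
    have hEκ : E κ a = E nu a + E (collapse PType.B (up eta)) a := by rw [hκ, E_add]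
    have hEκ' : E κ' a = E nu' a + E (collapse PType.B (up eta')) a := by rw [hκ', E_add]
    have hsκ : κ.sum = nu.sum + (collapse PType.B (up eta)).sum := by rw [hκ, Multiset.sum_add]
    have hsκ' : κ'.sum = nu'.sum + (collapse PType.B (up eta')).sum := by
      rw [hκ', Multiset.sum_add]
    have hW := E_add_W κ a
    have hW' := E_add_W κ' a
    simp only [dS] at hda
    rw [← hκ, ← hκ'] at hda
    have ho := (collapse_spec PType.B (transpose κ) (fun h => by cases h)).2.2.1 a
    have ho' := (collapse_spec PType.B (transpose κ') (fun h => by cases h)).2.2.2 a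
      (W κ a + 1) (by rw [psum_transpose]; omega) (by simp only [ee]; rw [Nat.even_iff]; omega)
    rw [psum_transpose] at ho
    omega
  | D =>
    have hc := h.2.2.2 (Or.inr rfl)
    have hc' := h'.2.2.2 (Or.inr rfl)
    have hcs := sum_add_card_even (l := nu) (fun x hx => (h.2.2.1 x hx).2)
    have hcs' := sum_add_card_even (l := nu') (fun x hx => (h'.2.2.1 x hx).2)
    have hAh := hA.2
    simp only [sumParity, ee] at hsp hsp' hbad
    rw [Nat.even_iff] at hc hc' hcs hcs' hsp hsp' hAh
    have hWe := E_add_W eta a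
    have hWe' := E_add_W eta' a
    have hWn := E_add_W nu a
    have hWn' := E_add_W nu' a
    obtain ⟨hP, -, hD, -⟩ := collapse_spec PType.D (transpose eta) (fun h => by cases h)
    obtain ⟨-, -, -, hlow'⟩ := collapse_spec PType.D (transpose eta') (fun h => by cases h)
    obtain ⟨c, hcd⟩ : ∃ c, c = collapse PType.D (transpose eta) := ⟨_, rfl⟩
    obtain ⟨c', hcd'⟩ : ∃ c', c' = collapse PType.D (transpose eta') := ⟨_, rfl⟩
    simp only [dS] at hda
    rw [← hcd, ← hcd'] at hda
    rw [← hcd] at hP hD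
    rw [← hcd'] at hlow'
    have h1 : W eta' a ≤ psum c' a := hlow' a _ (by rw [psum_transpose]) (by
      simp only [ee]; rw [Nat.even_iff]; omega)
    have h2 : psum c a + 1 ≤ W eta a := by
      have h3 := hD a
      rw [psum_transpose] at h3
      by_contra hne
      have heq : psum c a = W eta a := by omega
      obtain ⟨j, rfl⟩ : ∃ j, a = j + 1 := ⟨a - 1, by omega⟩
      have h4 := inP_odd hP j (by rw [heq]; simp only [ee]; rw [Nat.odd_iff]; omega)
      have h5 := touch hD (j := j) (by rw [heq, psum_transpose])
      rw [part_transpose, part_transpose] at h5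
      have h6 := count_add_height eta (j + 1)
      have h7 := Multiset.count_pos.2 hma
      omega
    have ho := (collapse_spec PType.D (transpose (nu + transpose c))
      (fun h => by cases h)).2.2.1 a
    rw [psum_transpose, W_add, W_transpose] at ho
    have ho' := (collapse_spec PType.D (transpose (nu' + transpose c'))
      (fun h => by cases h)).2.2.2 a (W nu' a + W eta' a)
        (by rw [psum_transpose, W_add, W_transpose]; omega)
        (by simp only [ee]; rw [Nat.even_iff]; omega)
    omega

lemma anti_bad {X : PType} {l : Ptn} {a : ℕ} (h : AntiPart X l a) : badPart X a := by
  cases X <;> exact h.1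

lemma anti_congr {X : PType} {l l' : Ptn} {a : ℕ} (h : AntiPart X l a)
    (hh : Even (height l a) ↔ Even (height l' a)) : AntiPart X l' a := by
  cases X
  · refine ⟨h.1, ?_⟩
    have := h.2
    rw [← Nat.not_even_iff_odd] at this ⊢
    tauto
  · exact ⟨h.1, hh.1 h.2⟩
  · exact ⟨h.1, hh.1 h.2⟩

/-- heights of the partial specialization -/
lemma height_zeta (l : Ptn) (a : ℕ) (ha : 1 ≤ a) (hc : 2 ≤ l.count a) (b : ℕ) (hb : 1 ≤ b) :
    height (((a + 1) ::ₘ (Multiset.replicate (l.count a - 2) a +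
        (if a ≤ 1 then (0 : Ptn) else {a - 1}))) +
        Multiset.filter (fun b => b ≠ a) l) b + (if b = a then 1 else 0)
      = height l b + (if b = a + 1 then 1 else 0) := by
  have h1 : height l b = height (Multiset.filter (fun b => b ≠ a) l) b
      + height (Multiset.replicate (l.count a) a) b := by
    rw [← height_add]
    congr 1
    rw [← Multiset.filter_eq', add_comm]
    exact (Multiset.filter_add_not _ _).symm
  have h2 : ∀ n, height (Multiset.replicate n a) b = if b ≤ a then n else 0 := by
    intro n
    induction n with
    | zero => simp [height]
    | succ n ih => rw [Multiset.replicate_succ, height_cons, ih]; split_ifs <;> omega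
  have h3 : height (if a ≤ 1 then (0 : Ptn) else {a - 1}) b = if b ≤ a - 1 then 1 else 0 := by
    split_ifs with h4 h5 h6
    · omega
    · simp [height]
    · rw [← Multiset.cons_zero, height_cons, height_zero', if_pos h6]
    · rw [← Multiset.cons_zero, height_cons, height_zero', if_neg h6]
  rw [height_add, height_cons, height_add, h1, h2, h2, h3]
  split_ifs <;> omega

lemma psum_le_of_heights {z l : Ptn} {a : ℕ} (ha : 1 ≤ a)
    (hh : ∀ b, 1 ≤ b → height z b + (if b = a then 1 else 0)
      = height l b + (if b = a + 1 then 1 else 0)) (j : ℕ) :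
    psum z j ≤ psum l j ∨
      (psum z j = psum l j + 1 ∧ height l (a + 1) < j ∧ j < height l a) := by
  obtain ⟨c, rfl⟩ : ∃ c, a = c + 1 := ⟨a - 1, by omega⟩
  obtain ⟨N, hN⟩ : ∃ N, N = z.sum + l.sum := ⟨_, rfl⟩
  have e1 := psum_eq_range z j (c + (2 + N)) (by omega)
  have e2 := psum_eq_range l j (c + (2 + N)) (by omega)
  rw [Finset.sum_range_add, Finset.sum_range_add] at e1 e2
  have s1 : ∑ i ∈ range c, min j (height z (i + 1)) = ∑ i ∈ range c, min j (height l (i + 1)) := by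
    apply Finset.sum_congr rfl
    intro i hi
    simp at hi
    have := hh (i + 1) (by omega)
    rw [if_neg (by omega), if_neg (by omega)] at this
    rw [show height z (i + 1) = height l (i + 1) by omega]
  have s2 : ∑ i ∈ range N, min j (height z (c + (2 + i) + 1))
      = ∑ i ∈ range N, min j (height l (c + (2 + i) + 1)) := by
    apply Finset.sum_congr rfl
    intro i hi
    have := hh (c + (2 + i) + 1) (by omega)
    rw [if_neg (by omega), if_neg (by omega)] at this
    rw [show height z (c + (2 + i) + 1) = height l (c + (2 + i) + 1) by omega]
  have t1 := hh (c + 1) (by omega)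
  have t2 := hh (c + 1 + 1) (by omega)
  simp only [if_true] at t1 t2
  rw [if_neg (by omega)] at t1 t2
  simp only [Finset.sum_range_succ, Finset.sum_range_zero, add_zero] at e1 e2
  omega

end Aux

/-- Lemma 5.10 of the paper: if `⟨λ,ν⟩ ≤ ⟨λ',ν'⟩` (i.e. `λ ≤ λ'` and
`d_S⟨λ,ν⟩ ≥ d_S⟨λ',ν'⟩`) with `⟨λ',ν'⟩` special and `⟨λ,ν⟩` nonspecial, then the
partition `ζ` produced by partial specialization at `⟨λ,ν⟩` still satisfies `ζ ≤ λ'`. -/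
theorem partial_specialization_le_special (X : PType) (nu eta nu' eta' : Ptn)
    (a l : ℕ) (zeta : Ptn)
    (h : IsMarked X nu eta) (h' : IsMarked X nu' eta')
    (hsum : (nu + eta).sum = (nu' + eta').sum)
    (hr : Reduced X (nu + eta) nu) (hr' : Reduced X (nu' + eta') nu')
    (hdom : Dom (nu + eta) (nu' + eta'))
    (hds : Dom (dS X nu' eta') (dS X nu eta))
    (hsp' : SpecialMP X (nu' + eta') nu')
    (hns : ¬ SpecialMP X (nu + eta) nu)
    (hC : X = PType.C → eta ≠ 0 ∧ eta' ≠ 0)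
    (ha : a ∈ nu + eta ∧ AntiPart X (nu + eta) a ∧ Odd (height nu a) ∧
      ∀ b ∈ nu + eta, AntiPart X (nu + eta) b → Odd (height nu b) → a ≤ b)
    (hl : l = (nu + eta).count a)
    (hzeta : zeta = ((a + 1) ::ₘ (Multiset.replicate (l - 2) a +
        (if a ≤ 1 then (0 : Ptn) else {a - 1}))) +
        Multiset.filter (fun b => b ≠ a) (nu + eta)) :
    Dom zeta (nu' + eta') := by
  obtain ⟨hm, hA, hk, -⟩ := ha
  have hbadP := anti_bad hA
  have hbad := (bad_iff X a).1 hbadP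
  have hapos : 1 ≤ a := h.1.1 a hm
  have hc2 : 2 ≤ (nu + eta).count a := by
    have h1 := Multiset.count_pos.2 hm
    have h2 := h.1.2 a hbadP
    rw [Nat.even_iff] at h2
    omega
  intro j
  subst hl
  have hz := psum_le_of_heights hapos (fun b hb => height_zeta (nu + eta) a hapos hc2 b hb) j
  rw [← hzeta] at hz
  have hdj := hdom j
  rcases hz with hz | ⟨hz, hj1, hj2⟩
  · omega
  by_contra hlt
  have heq : psum (nu + eta) j = psum (nu' + eta') j := by omega
  obtain ⟨k, rfl⟩ : ∃ k, j = k + 1 := ⟨j - 1, by omega⟩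
  have ht := touch hdom heq
  have p1 := le_part_iff (nu + eta) k (a + 1) (by omega)
  have p2 := le_part_iff (nu + eta) (k + 1) a hapos
  have p3 : part (nu + eta) (k + 1) ≤ part (nu + eta) k := part_antitone _ (by omega)
  have p4 : part (nu' + eta') (k + 1) ≤ part (nu' + eta') k := part_antitone _ (by omega)
  have q1 := psum_succ_E (nu + eta) k a (by omega) (by omega)
  have q2 := psum_succ_E (nu' + eta') k a (by omega) (by omega)
  have hE : E (nu + eta) a = E (nu' + eta') a := by omega
  have hm' : a ∈ nu' + eta' := by
    have r1 := le_part_iff (nu' + eta') k (a + 1) (by omega)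
    have r2 := le_part_iff (nu' + eta') (k + 1) a hapos
    have r3 := count_add_height (nu' + eta') a
    rw [← Multiset.count_pos]
    omega
  have b1 := E_add_height_bad h.1 hbad
  have b2 := E_add_height_bad h'.1 hbad
  rw [Nat.even_add] at b1 b2
  rw [← hE] at b2
  have hk' := hsp' a hm' (anti_congr hA (b1.symm.trans b2))
  exact core X nu eta nu' eta' a hbad hapos h h' hsum hE hm hm' hA hk hk' hds

end NilDual
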